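/- arXiv:math/0703180 — 2 statements merged into one kernel-verified Lean document; each statement's English description precedes it below -/
import Mathlib

section
/- Let p be a prime, let F_p = Z/pZ, and let f(x_1,...,x_n) = a_1 x_1^k + ... + a_n x_n^k + g(x_1,...,x_n) be a polynomial over F_p, where k is a positive integer with k < p, a_1,...,a_n are nonzero elements of F_p, and g is a polynomial of total degree less than k. If n ≥ ⌈(p-1)/⌊(p-1)/k⌋⌉, then the equation f(x_1,...,x_n) = 0 has a solution with x_1,...,x_n ∈ F_p (indeed, the value set {f(x_1,...,x_n) : x_1,...,x_n ∈ F_p} is all of F_p). -/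
open MvPolynomial in
lemma aux_pow_deg {σ R : Type*} [CommRing R] (h g : MvPolynomial σ R) (k : ℕ)
    (hh : h.totalDegree ≤ k) (hg : g.totalDegree < k) (N : ℕ) :
    ((h + g) ^ (N + 1) - h ^ (N + 1)).totalDegree < k * (N + 1) := by
  induction N with
  | zero => simpa using hg
  | succ N ih =>
    have e : (h + g) ^ (N + 1 + 1) - h ^ (N + 1 + 1)
        = ((h + g) ^ (N + 1) - h ^ (N + 1)) * (h + g) + h ^ (N + 1) * g := by ring
    rw [e]
    refine lt_of_le_of_lt (totalDegree_add _ _) (max_lt ?_ ?_)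
    · have h1 := totalDegree_mul ((h + g) ^ (N + 1) - h ^ (N + 1)) (h + g)
      have h2 := totalDegree_add h g
      have h3 : max h.totalDegree g.totalDegree ≤ k := max_le hh hg.le
      have : k * (N + 1 + 1) = k * (N + 1) + k := by ring
      omega
    · have h1 := totalDegree_mul (h ^ (N + 1)) g
      have h2 := totalDegree_pow h (N + 1)
      have h3 : (N + 1) * h.totalDegree ≤ (N + 1) * k := Nat.mul_le_mul_left _ hh
      have : k * (N + 1 + 1) = (N + 1) * k + k := by ring
      omega

lemma aux_choose (q : ℕ) : ∀ (n s : ℕ), s ≤ q * n →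
    ∃ m : Fin n → ℕ, (∀ i, m i ≤ q) ∧ ∑ i, m i = s := by
  intro n
  induction n with
  | zero => intro s hs; exact ⟨fun _ => 0, by simp, by simp at hs; simp [hs]⟩
  | succ n ih =>
    intro s hs
    have : q * (n + 1) = q * n + q := by ring
    obtain ⟨m, hm, hs'⟩ := ih (s - min s q) (by omega)
    refine ⟨Fin.cons (min s q) m, ?_, ?_⟩
    · intro i
      refine Fin.cases ?_ ?_ i
      · simp
      · intro j; simpa using hm j
    · rw [Fin.sum_univ_succ]
      simp [hs']

open MvPolynomial in
lemma aux_coeff {R : Type*} [CommRing R] {n : ℕ} (a : Fin n → R) (N k : ℕ) (hk : k ≠ 0)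
    (m : Fin n →₀ ℕ) (hm : ∑ i, m i = N) :
    coeff (k • m) ((∑ i, C (a i) * X i ^ k) ^ N : MvPolynomial (Fin n) R)
      = (Nat.multinomial Finset.univ m : R) * ∏ i, a i ^ m i := by
  classical
  have e : ((∑ i, C (a i) * X i ^ k) ^ N : MvPolynomial (Fin n) R)
      = expand k ((∑ i, C (a i) * X i) ^ N) := by
    simp [map_pow, map_sum]
  rw [e, coeff_expand_smul _ hk, Finset.sum_pow_eq_sum_piAntidiag, coeff_sum]
  have key : ∀ l : Fin n → ℕ, ((Nat.multinomial Finset.univ l : MvPolynomial (Fin n) R)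
      * ∏ i, (C (a i) * X i) ^ l i) =
      monomial (Finsupp.equivFunOnFinite.symm l)
        ((Nat.multinomial Finset.univ l : R) * ∏ i, a i ^ l i) := by
    intro l
    rw [monomial_eq, Finsupp.prod_fintype _ _ (by simp)]
    simp [mul_pow, Finset.prod_mul_distrib, mul_assoc]
  simp only [key, coeff_monomial]
  rw [Finset.sum_eq_single (m : Fin n → ℕ)]
  · rw [if_pos (by ext; simp)]
  · intro b _ hb
    rw [if_neg]
    rintro rfl
    exact hb (by ext; simp)
  · intro h
    exact absurd (by simp [Finset.mem_piAntidiag, hm]) h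

open MvPolynomial in
lemma aux_main (p : ℕ) (hp : p.Prime) (n k : ℕ) (hk : 0 < k) (hkp : k < p)
    (a : Fin n → ZMod p) (ha : ∀ i, a i ≠ 0)
    (g : MvPolynomial (Fin n) (ZMod p)) (hg : g.totalDegree < k)
    (hn : (p - 1) ⌈/⌉ ((p - 1) / k) ≤ n) :
    ∃ x : Fin n → ZMod p, eval x ((∑ i, C (a i) * X i ^ k) + g) = 0 := by
  haveI : Fact p.Prime := ⟨hp⟩
  have hq : 0 < (p - 1) / k := Nat.div_pos (by omega) hk
  rw [ceilDiv_le_iff_le_mul hq] at hn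
  obtain ⟨m', hm', hsum⟩ := aux_choose _ n _ hn
  obtain ⟨m, rfl⟩ : ∃ m : Fin n →₀ ℕ, m' = m := ⟨Finsupp.equivFunOnFinite.symm m', by ext; simp⟩
  by_contra! hne
  obtain ⟨N, hN⟩ : ∃ N, p - 1 = N + 1 := ⟨p - 2, by have := hp.two_le; omega⟩
  set h : MvPolynomial (Fin n) (ZMod p) := ∑ i, C (a i) * X i ^ k with hh
  have hhdeg : h.totalDegree ≤ k := by
    refine totalDegree_finsetSum_le fun i _ => ?_
    refine (totalDegree_mul _ _).trans ?_
    simp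
  set P := (h + g) ^ (p - 1) - 1 with hP
  have hdt : (k • m).degree = k * (p - 1) := by
    rw [map_nsmul, Finsupp.degree_eq_sum, hsum, smul_eq_mul]
  have hr := aux_pow_deg h g k hhdeg hg N
  rw [← hN] at hr
  have hPd : P = h ^ (p - 1) + (((h + g) ^ (p - 1) - h ^ (p - 1)) - 1) := by rw [hP]; ring
  have hr' : (((h + g) ^ (p - 1) - h ^ (p - 1)) - 1).totalDegree < k * (p - 1) := by
    refine lt_of_le_of_lt (totalDegree_sub _ _) (max_lt hr ?_)
    simp only [totalDegree_one]
    exact lt_of_le_of_lt (Nat.zero_le _) hr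
  have hc : coeff (k • m) P ≠ 0 := by
    rw [hPd, coeff_add, aux_coeff a (p - 1) k hk.ne' m hsum,
      coeff_eq_zero_of_totalDegree_lt (f := ((h + g) ^ (p - 1) - h ^ (p - 1)) - 1), add_zero]
    · refine mul_ne_zero ?_ (Finset.prod_ne_zero_iff.2 fun i _ => pow_ne_zero _ (ha i))
      intro h0
      rw [ZMod.natCast_eq_zero_iff] at h0
      have h1 := Nat.multinomial_spec Finset.univ m
      rw [hsum] at h1
      have h2 : p ∣ (p - 1).factorial := h1 ▸ Dvd.dvd.mul_left h0 _
      rw [hp.dvd_factorial] at h2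
      have := hp.pos
      omega
    · change _ < (k • m).degree
      rw [hdt]; exact hr'
  have hdeg : P.totalDegree = (k • m).degree := by
    apply le_antisymm
    · rw [hdt, hPd]
      refine (totalDegree_add _ _).trans (max_le ?_ hr'.le)
      refine (totalDegree_pow _ _).trans ?_
      rw [mul_comm k]
      exact Nat.mul_le_mul_left _ hhdeg
    · exact le_totalDegree (mem_support_iff.2 hc)
  obtain ⟨s, -, hs⟩ := combinatorial_nullstellensatz_exists_eval_nonzero P (k • m) hc hdeg
    (fun _ => Finset.univ) (by
      intro i
      rw [Finset.card_univ, ZMod.card]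
      have h1 : k * m i ≤ k * ((p - 1) / k) := Nat.mul_le_mul_left _ (hm' i)
      have h2 := Nat.mul_div_le (p - 1) k
      have := hp.pos
      simp only [Finsupp.smul_apply, smul_eq_mul]
      omega)
  apply hs
  rw [hP, map_sub, map_pow, map_one, ZMod.pow_card_sub_one_eq_one (hne s), sub_self]

theorem stmt4 (p : ℕ) (hp : p.Prime) (n k : ℕ) (hk : 0 < k) (hkp : k < p)
    (a : Fin n → ZMod p) (ha : ∀ i, a i ≠ 0)
    (g f : MvPolynomial (Fin n) (ZMod p)) (hg : g.totalDegree < k)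
    (hf : f = (∑ i, MvPolynomial.C (a i) * MvPolynomial.X i ^ k) + g)
    (hn : (p - 1) ⌈/⌉ ((p - 1) / k) ≤ n) :
    (∃ x : Fin n → ZMod p, MvPolynomial.eval x f = 0) ∧
      ({y | ∃ x : Fin n → ZMod p, MvPolynomial.eval x f = y} : Set (ZMod p)) = Set.univ := by
  subst hf
  refine ⟨aux_main p hp n k hk hkp a ha g hg hn, ?_⟩
  rw [Set.eq_univ_iff_forall]
  intro y
  obtain ⟨x, hx⟩ := aux_main p hp n k hk hkp a ha (g - MvPolynomial.C y)
    (lt_of_le_of_lt (MvPolynomial.totalDegree_sub_C_le _ _) hg) hn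
  refine ⟨x, ?_⟩
  rw [← add_sub_assoc, map_sub, MvPolynomial.eval_C, sub_eq_zero] at hx
  exact hx
end

section
/- Let F be a field and let f(x_1,...,x_n) = a_1 x_1^k + ... + a_n x_n^k + g(x_1,...,x_n) be a polynomial over F, where k is a positive integer with n ≥ k, a_1,...,a_n are nonzero elements of F, and g is a polynomial of total degree less than k. Then for any finite subset A of F, the restricted value set {f(x_1,...,x_n) : x_1,...,x_n ∈ A, and x_i ≠ x_j whenever i ≠ j} has cardinality at least min{p(F), |A| - n + 1}. -/
/-- `p(F)`: the characteristic of `F` if positive, `+∞` if `F` has characteristic zero,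
as an extended integer. -/
noncomputable def fieldCharZ (F : Type*) [Field F] : WithTop ℤ :=
  if ringChar F = 0 then ⊤ else (ringChar F : WithTop ℤ)

open MvPolynomial in
theorem aux_lowMul {σ F : Type*} [Field F] (N1 N2 : ℕ) (R S : MvPolynomial σ F)
    (hR : ∀ d : σ →₀ ℕ, N1 ≤ d.degree → coeff d R = 0) (hS : S.totalDegree ≤ N2) :
    ∀ d : σ →₀ ℕ, N1 + N2 ≤ d.degree → coeff d (R * S) = 0 := by
  classical
  intro d hd
  rw [coeff_mul]
  refine Finset.sum_eq_zero ?_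
  rintro ⟨x, y⟩ hxy
  rw [Finset.HasAntidiagonal.mem_antidiagonal] at hxy
  simp only at hxy ⊢
  by_cases hx : N1 ≤ x.degree
  · rw [hR x hx, zero_mul]
  · have hy : coeff y S = 0 := by
      apply coeff_eq_zero_of_totalDegree_lt
      rw [← Finsupp.degree_apply]
      have : d.degree = x.degree + y.degree := by rw [← hxy, map_add]
      omega
    rw [hy, mul_zero]

open MvPolynomial in
theorem aux_prod {σ F : Type*} [Field F] (k : ℕ) (hk : 0 < k) (h g : MvPolynomial σ F)
    (hh : h.totalDegree ≤ k) (hg : g.totalDegree < k) (s : Multiset F) :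
    (s.map (fun c => h + g - C c)).prod.totalDegree ≤ k * s.card ∧
    ∃ R, (s.map (fun c => h + g - C c)).prod = h ^ s.card + R ∧
      ∀ d : σ →₀ ℕ, k * s.card ≤ d.degree → coeff d R = 0 := by
  induction s using Multiset.induction_on with
  | empty => exact ⟨by simp, 0, by simp, by simp⟩
  | cons c s ih =>
    obtain ⟨hd, R, hR, hR0⟩ := ih
    have hu : (g - C c).totalDegree < k := by
      refine lt_of_le_of_lt (totalDegree_sub _ _) ?_
      simp [hg, hk]
    refine ⟨?_, R * h + (g - C c) * (s.map (fun c => h + g - C c)).prod, ?_, ?_⟩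
    · rw [Multiset.map_cons, Multiset.prod_cons, Multiset.card_cons]
      refine (totalDegree_mul _ _).trans ?_
      have : (h + g - C c).totalDegree ≤ k := by
        rw [add_sub_assoc]
        exact (totalDegree_add _ _).trans (max_le hh hu.le)
      rw [Nat.mul_succ]
      omega
    · rw [Multiset.map_cons, Multiset.prod_cons, Multiset.card_cons, pow_succ]
      have : (h + g - C c) * (s.map (fun c => h + g - C c)).prod
        = h * (s.map (fun c => h + g - C c)).prod
          + (g - C c) * (s.map (fun c => h + g - C c)).prod := by ring
      rw [this]
      nth_rewrite 1 [hR]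
      ring
    · intro d hdd
      rw [Multiset.card_cons, Nat.mul_succ] at hdd
      rw [coeff_add, aux_lowMul _ _ R h hR0 hh d hdd,
        aux_lowMul k (k * s.card) (g - C c) _ ?_ hd d (by omega), add_zero]
      intro e he
      apply coeff_eq_zero_of_totalDegree_lt
      rw [← Finsupp.degree_apply]
      omega

theorem aux_hermite (k m : ℕ) (hk : 0 < k) :
    ∑ i : Fin k, ((m + k - 1 - (i : ℕ)) / k) = m := by
  rw [Fin.sum_univ_eq_sum_range (fun i => (m + k - 1 - i) / k) k,
    ← Finset.sum_range_reflect]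
  have : ∀ j ∈ Finset.range k, (m + k - 1 - (k - 1 - j)) / k = (m + j) / k := by
    intro j hj
    rw [Finset.mem_range] at hj
    congr 1
    omega
  rw [Finset.sum_congr rfl this]
  clear this
  induction m with
  | zero =>
    refine Finset.sum_eq_zero fun j hj => ?_
    rw [Finset.mem_range] at hj
    simp [Nat.div_eq_of_lt hj]
  | succ m ih =>
    have h1 := Finset.sum_range_succ (fun j => (m + j) / k) k
    have h2 := Finset.sum_range_succ' (fun j => (m + j) / k) k
    rw [ih] at h1
    rw [h1] at h2
    have h3 : ∀ j ∈ Finset.range k, (m + 1 + j) / k = (m + (j + 1)) / k := by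
      intro j _
      congr 1
      omega
    rw [Finset.sum_congr rfl h3]
    have h4 : (m + k) / k = m / k + 1 := Nat.add_div_right m hk
    simp only [h4, add_zero] at h2
    omega

open MvPolynomial in
/-- Vandermonde determinant in the variables `e i`. -/
theorem aux_vand {σ F : Type*} [Field F] (k : ℕ) (e : Fin k → σ) :
    (Matrix.vandermonde (fun i => (X (e i) : MvPolynomial σ F))).det =
      ∑ τ : Equiv.Perm (Fin k), monomial (Finsupp.mapDomain e
        (Finsupp.equivFunOnFinite.symm (fun i => ((τ i : Fin k) : ℕ))))
          (((Equiv.Perm.sign τ : ℤ) : F)) := by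
  rw [← Matrix.det_transpose, Matrix.det_apply']
  refine Finset.sum_congr rfl fun τ _ => ?_
  have h1 : ∏ i, (Matrix.vandermonde (fun i => (X (e i) : MvPolynomial σ F))).transpose (τ i) i
      = monomial (Finsupp.mapDomain e
        (Finsupp.equivFunOnFinite.symm (fun i => ((τ i : Fin k) : ℕ)))) 1 := by
    rw [← rename_monomial, monomial_eq]
    rw [Finsupp.prod_fintype _ _ (by simp)]
    simp [Matrix.vandermonde_apply]
  rw [h1]
  have : (((Equiv.Perm.sign τ : ℤ)) : MvPolynomial σ F) = C (((Equiv.Perm.sign τ : ℤ) : F)) := by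
    simp
  rw [this, C_mul_monomial, mul_one]

open MvPolynomial in
theorem aux_coeff_s7 {F : Type*} [Field F] {n k : ℕ} (hk : 0 < k) (e : Fin k → Fin n)
    (he : Function.Injective e) (a : Fin n → F) (ha : ∀ i, a i ≠ 0) (m : ℕ)
    (hm : (m.factorial : F) ≠ 0) (μ : Fin k → ℕ) (hμ : ∑ i, μ i = m) :
    coeff (k • Finsupp.mapDomain e (Finsupp.equivFunOnFinite.symm μ) +
        Finsupp.mapDomain e (Finsupp.equivFunOnFinite.symm (fun i => (i : ℕ))))
      ((∑ i, C (a i) * X i ^ k) ^ m *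
        (Matrix.vandermonde (fun i => (X (e i) : MvPolynomial (Fin n) F))).det) ≠ 0 := by
  classical
  have hE : (∑ i, C (a i) * X i ^ k : MvPolynomial (Fin n) F) ^ m
      = expand k ((∑ i, a i • X i) ^ m) := by
    simp [smul_eq_C_mul]
  rw [hE, aux_vand, Finset.mul_sum, coeff_sum, Finset.sum_eq_single 1]
  · have h1 : (fun i : Fin k => (((1 : Equiv.Perm (Fin k)) i : Fin k) : ℕ))
      = fun i : Fin k => (i : ℕ) := rfl
    rw [h1, coeff_mul_monomial, coeff_expand_smul k hk.ne', coeff_linearCombination_X_pow_of_fintype]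
    have hs : (Finsupp.mapDomain e (Finsupp.equivFunOnFinite.symm μ)).sum (fun _ m => m) = m := by
      have := Finsupp.degree_mapDomain e (Finsupp.equivFunOnFinite.symm μ)
      rw [Finsupp.degree_eq_sum (Finsupp.equivFunOnFinite.symm μ)] at this
      rw [← hμ]
      exact this
    rw [if_pos hs]
    refine mul_ne_zero (mul_ne_zero ?_ ?_) (by simp)
    · intro h0
      apply hm
      have := Nat.multinomial_spec (Finsupp.mapDomain e (Finsupp.equivFunOnFinite.symm μ)).support
        (Finsupp.mapDomain e (Finsupp.equivFunOnFinite.symm μ))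
      rw [Finsupp.sum] at hs
      rw [hs] at this
      rw [← this, Nat.cast_mul]
      rw [Finsupp.multinomial_eq] at h0
      rw [h0, mul_zero]
    · rw [Finsupp.prod]
      exact Finset.prod_ne_zero_iff.2 fun i _ => pow_ne_zero _ (ha i)
  · intro τ _ hτ
    rw [coeff_mul_monomial']
    split_ifs with hle
    · obtain ⟨i, hi⟩ : ∃ i, τ i ≠ i := by
        by_contra! hc
        exact hτ (Equiv.ext hc)
      rw [coeff_expand_of_not_dvd (i := e i), zero_mul]
      have h2 := hle (e i)
      simp only [Finsupp.coe_add, Finsupp.coe_smul, Finsupp.coe_tsub, Pi.add_apply, Pi.sub_apply,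
        Pi.smul_apply, Finsupp.mapDomain_apply he, Finsupp.equivFunOnFinite_symm_apply_apply,
        smul_eq_mul] at h2 ⊢
      intro hdvd
      apply hi
      apply Fin.ext
      obtain ⟨q, hq⟩ := hdvd
      have h3 : k * μ i + (i : ℕ) = k * q + (τ i : ℕ) := by omega
      have h4 := congrArg (· % k) h3
      simpa [Nat.mul_add_mod, Nat.mod_eq_of_lt i.2, Nat.mod_eq_of_lt (τ i).2] using h4.symm
    · rfl
  · simp

open MvPolynomial in
theorem aux_core {F : Type*} [Field F] (n k : ℕ) (hk : 0 < k) (hnk : k ≤ n)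
    (a : Fin n → F) (ha : ∀ i, a i ≠ 0)
    (g : MvPolynomial (Fin n) F) (hg : g.totalDegree < k)
    (A : Finset F) (m : ℕ) (hA : m + n ≤ A.card) (hm : (m.factorial : F) ≠ 0)
    (T : Finset F) (hT : T.card ≤ m) :
    ∃ x : Fin n → F, (∀ i, x i ∈ A) ∧ Function.Injective x ∧
      eval x ((∑ i, C (a i) * X i ^ k) + g) ∉ T := by
  classical
  obtain ⟨φ⟩ : Nonempty (Fin n ↪ A) :=
    Function.Embedding.nonempty_of_card_le (by simp; omega)
  set B : Finset F := (Finset.univ.filter (fun i : Fin n => k ≤ (i : ℕ))).image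
    (fun i => (φ i : F)) with hB
  have hBA : B ⊆ A := by
    intro y hy
    rw [hB, Finset.mem_image] at hy
    obtain ⟨i, _, rfl⟩ := hy
    exact (φ i).2
  set e : Fin k → Fin n := Fin.castLE hnk with he_def
  have he : Function.Injective e := Fin.castLE_injective hnk
  have hBc : B.card ≤ n - k := by
    refine Finset.card_image_le.trans ?_
    have h1 : (Finset.univ.filter (fun i : Fin n => k ≤ (i : ℕ))) ⊆
        (Finset.univ.image e)ᶜ := by
      intro i hi
      simp only [Finset.mem_filter, Finset.mem_univ, true_and, Finset.mem_compl,
        Finset.mem_image, not_exists] at hi ⊢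
      rintro j rfl
      have := j.2
      simp [he_def] at hi
      omega
    have h2 := Finset.card_le_card h1
    rwa [Finset.card_compl, Finset.card_image_of_injective _ he, Fintype.card_fin,
      Finset.card_univ, Fintype.card_fin] at h2
  have hAB : m + k ≤ (A \ B).card := by
    rw [Finset.card_sdiff_of_subset hBA]
    omega
  set h : MvPolynomial (Fin n) F := ∑ i, C (a i) * X i ^ k with hh_def
  have hh : h.totalDegree ≤ k := by
    refine totalDegree_finsetSum_le fun i _ => ?_
    refine (totalDegree_mul _ _).trans ?_
    simp
  set s : Multiset F := T.val + Multiset.replicate (m - T.card) 0 with hs_def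
  have hs : s.card = m := by
    simp [hs_def]
    omega
  obtain ⟨hQ, R, hR, hR0⟩ := aux_prod k hk h g hh hg s
  rw [hs] at hQ hR hR0
  set Q := (s.map (fun c => h + g - C c)).prod with hQ_def
  set V := (Matrix.vandermonde (fun i => (X (e i) : MvPolynomial (Fin n) F))).det with hV_def
  set μ : Fin k → ℕ := fun i => (m + k - 1 - (i : ℕ)) / k with hμ_def
  have hμ : ∑ i, μ i = m := aux_hermite k m hk
  set D : Fin n →₀ ℕ := k • Finsupp.mapDomain e (Finsupp.equivFunOnFinite.symm μ) +
        Finsupp.mapDomain e (Finsupp.equivFunOnFinite.symm (fun i => (i : ℕ))) with hD_def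
  have hDdeg : D.degree = k * m + ∑ i : Fin k, (i : ℕ) := by
    rw [hD_def, map_add, map_nsmul, Finsupp.degree_mapDomain, Finsupp.degree_mapDomain,
      Finsupp.degree_eq_sum, Finsupp.degree_eq_sum]
    simp [hμ]
  have hVdeg : V.totalDegree ≤ ∑ i : Fin k, (i : ℕ) := by
    rw [hV_def, aux_vand]
    refine totalDegree_finsetSum_le fun τ _ => ?_
    refine (totalDegree_monomial_le _ _).trans ?_
    have h1 := Finsupp.degree_mapDomain e
      (Finsupp.equivFunOnFinite.symm (fun i => ((τ i : Fin k) : ℕ)))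
    rw [Finsupp.degree_eq_sum (Finsupp.equivFunOnFinite.symm _)] at h1
    refine le_of_eq (Eq.trans h1 ?_)
    simpa using Equiv.sum_comp τ (fun i : Fin k => (i : ℕ))
  have hcoeff : coeff D (Q * V) ≠ 0 := by
    rw [hR, add_mul, coeff_add, aux_lowMul _ _ R V hR0 hVdeg D hDdeg.ge, add_zero]
    exact aux_coeff_s7 hk e he a ha m hm μ hμ
  have hdeg : (Q * V).totalDegree = D.degree := by
    apply le_antisymm
    · rw [hDdeg]
      exact (totalDegree_mul _ _).trans (add_le_add hQ hVdeg)
    · exact le_totalDegree (mem_support_iff.2 hcoeff)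
  obtain ⟨x, hx, hx0⟩ := combinatorial_nullstellensatz_exists_eval_nonzero (Q * V) D hcoeff hdeg
    (fun i : Fin n => if (i : ℕ) < k then A \ B else {(φ i : F)}) (by
      intro i
      by_cases hi : (i : ℕ) < k
      · rw [if_pos hi]
        refine lt_of_lt_of_le ?_ hAB
        obtain ⟨j, rfl⟩ : ∃ j, e j = i := ⟨⟨i, hi⟩, rfl⟩
        simp only [hD_def, Finsupp.coe_add, Finsupp.coe_smul, Pi.add_apply,
          Pi.smul_apply, Finsupp.mapDomain_apply he, Finsupp.equivFunOnFinite_symm_apply_apply,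
          smul_eq_mul]
        have h1 : k * μ j ≤ m + k - 1 - (j : ℕ) := Nat.mul_div_le _ _
        have := j.2
        omega
      · rw [if_neg hi]
        have h1 : i ∉ Set.range e := by
          rintro ⟨j, rfl⟩
          exact hi j.2
        simp [hD_def, Finsupp.mapDomain_of_notMem_range _ _ h1])
  rw [map_mul] at hx0
  have hxQ := left_ne_zero_of_mul hx0
  have hxV := right_ne_zero_of_mul hx0
  refine ⟨x, ?_, ?_, ?_⟩
  · intro i
    have := hx i
    split_ifs at this
    · exact (Finset.mem_sdiff.1 this).1
    · rw [Finset.mem_singleton.1 this]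
      exact (φ i).2
  · have hinj : Function.Injective (fun i => x (e i)) := by
      rw [← Matrix.det_vandermonde_ne_zero_iff]
      have h1 : eval x V = (Matrix.vandermonde (fun i => x (e i))).det := by
        rw [hV_def, RingHom.map_det]
        congr 1
        ext i j
        simp [Matrix.vandermonde_apply]
      rwa [← h1]
    have hlow : ∀ i : Fin n, (i : ℕ) < k → x i ∉ B := by
      intro i hi
      have := hx i
      rw [if_pos hi] at this
      exact (Finset.mem_sdiff.1 this).2
    have hhigh : ∀ i : Fin n, ¬ (i : ℕ) < k → x i = φ i := by
      intro i hi
      have := hx i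
      rw [if_neg hi] at this
      exact Finset.mem_singleton.1 this
    have hhB : ∀ i : Fin n, ¬ (i : ℕ) < k → x i ∈ B := by
      intro i hi
      rw [hhigh i hi, hB]
      exact Finset.mem_image_of_mem _ (by simpa using hi)
    intro i j hij
    by_cases hi : (i : ℕ) < k <;> by_cases hj : (j : ℕ) < k
    · have := @hinj ⟨i, hi⟩ ⟨j, hj⟩ hij
      have h2 := congrArg Fin.val this
      exact Fin.ext h2
    · exact absurd (hij ▸ hhB j hj) (hlow i hi)
    · exact absurd (hij ▸ hhB i hi) (hlow j hj)
    · rw [hhigh i hi, hhigh j hj] at hij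
      exact φ.injective (Subtype.ext hij)
  · intro hmem
    apply hxQ
    rw [hQ_def, map_multiset_prod, Multiset.map_map]
    apply Multiset.prod_eq_zero
    rw [Multiset.mem_map]
    refine ⟨_, Multiset.mem_add.2 (Or.inl hmem), ?_⟩
    simp


theorem stmt7 {F : Type*} [Field F] (n k : ℕ) (hk : 0 < k) (hnk : k ≤ n)
    (a : Fin n → F) (ha : ∀ i, a i ≠ 0)
    (g f : MvPolynomial (Fin n) F) (hg : g.totalDegree < k)
    (hf : f = (∑ i, MvPolynomial.C (a i) * MvPolynomial.X i ^ k) + g)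
    (A : Finset F) :
    min (fieldCharZ F) (((A.card : ℤ) - (n : ℤ) + 1 : ℤ) : WithTop ℤ)
      ≤ ((({y | ∃ x : Fin n → F, (∀ i, x i ∈ A) ∧ Function.Injective x ∧
            MvPolynomial.eval x f = y} : Set F).ncard : ℤ) : WithTop ℤ) := by
  classical
  set Y : Set F := {y | ∃ x : Fin n → F, (∀ i, x i ∈ A) ∧ Function.Injective x ∧
            MvPolynomial.eval x f = y} with hY
  have hfin : Y.Finite := by
    refine ((Set.Finite.pi' (fun _ : Fin n => A.finite_toSet)).image
      (fun x => MvPolynomial.eval x f)).subset ?_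
    rintro y ⟨x, hx, -, rfl⟩
    exact ⟨x, fun i => hx i, rfl⟩
  have key : ∀ m : ℕ, m + n ≤ A.card → (m.factorial : F) ≠ 0 → m + 1 ≤ Y.ncard := by
    intro m hA hm
    by_contra hlt
    obtain ⟨x, h1, h2, h3⟩ := aux_core n k hk hnk a ha g hg A m hA hm hfin.toFinset (by
      rw [← Set.ncard_eq_toFinset_card Y hfin]
      omega)
    rw [Set.Finite.mem_toFinset] at h3
    exact h3 ⟨x, h1, h2, by rw [hf]⟩
  by_cases hn : A.card < n
  · refine (min_le_right _ _).trans ?_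
    rw [WithTop.coe_le_coe]
    omega
  push Not at hn
  by_cases hp : ringChar F = 0
  · refine (min_le_right _ _).trans ?_
    rw [WithTop.coe_le_coe]
    haveI : CharZero F := by
      haveI : CharP F 0 := hp ▸ ringChar.charP F
      exact CharP.charP_to_charZero F
    have := key (A.card - n) (by omega) (Nat.cast_ne_zero.2 (Nat.factorial_ne_zero _))
    omega
  · have hprime : (ringChar F).Prime :=
      (CharP.char_is_prime_or_zero F (ringChar F)).resolve_right hp
    have hfac : ∀ m, m < ringChar F → (m.factorial : F) ≠ 0 := by
      intro m hm h0
      rw [ringChar.spec, hprime.dvd_factorial] at h0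
      omega
    have hpos := hprime.pos
    rcases le_or_gt (ringChar F) (A.card - n + 1) with hle | hgt
    · refine (min_le_left _ _).trans ?_
      rw [fieldCharZ, if_neg hp]
      have := key (ringChar F - 1) (by omega) (hfac _ (by omega))
      have h2 : ringChar F ≤ Y.ncard := by omega
      have h3 : ((ringChar F : ℕ) : ℤ) ≤ (Y.ncard : ℤ) := by exact_mod_cast h2
      have h4 := WithTop.coe_le_coe.2 h3
      simpa using h4
    · refine (min_le_right _ _).trans ?_
      rw [WithTop.coe_le_coe]
      have := key (A.card - n) (by omega) (hfac _ (by omega))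
      omega
end
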